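/- arXiv:0806.1022 — 2 statements merged into one kernel-verified Lean document; each statement's English description precedes it below -/
import Mathlib

section
/- Let p : 𝔅 → G be an upper semicontinuous Banach bundle over a locally compact Hausdorff space G, let φ₁, φ₂ ∈ C_c(G) be nonnegative, and let h ∈ Γ_c(G;𝔅) satisfy ‖h(x)‖ ≤ φ₁(x) + φ₂(x) for all x ∈ G. Define σ_i(x) = φ_i(x)/(φ₁(x)+φ₂(x)) if φ₁(x)+φ₂(x) > 0 and σ_i(x) = 0 otherwise (i = 1,2), and set h_i(x) := σ_i(x)·h(x). Then h₁ and h₂ are continuous compactly supported sections of 𝔅, h = h₁ + h₂, and ‖h_i(x)‖ ≤ φ_i(x) for all x ∈ G and i = 1,2. -/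
open MeasureTheory Filter Topology Set

/-- An upper semicontinuous Banach bundle over a topological space `X`, with fibres
`Fib x` (each a complex Banach space), total space `(x : X) × Fib x` and bundle
projection `Sigma.fst`.  The axioms are (B1)–(B4) of the paper, together with the
standing assumption that the bundle has enough sections. -/
structure USCBanachBundle (X : Type) [TopologicalSpace X] (Fib : X → Type)
    [∀ x, NormedAddCommGroup (Fib x)] [∀ x, NormedSpace ℂ (Fib x)]
    [∀ x, CompleteSpace (Fib x)] : Type where
  /-- the topology on the total space `Σ x, Fib x` -/
  topTotal : TopologicalSpace ((x : X) × Fib x)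
  /-- the projection is continuous -/
  continuous_proj : @Continuous ((x : X) × Fib x) X topTotal inferInstance
    fun b => b.1
  /-- the projection is an open map -/
  isOpenMap_proj : @IsOpenMap ((x : X) × Fib x) X topTotal inferInstance
    fun b => b.1
  /-- (B1): the norm is upper semicontinuous on the total space -/
  isOpen_norm_lt : ∀ r : ℝ, @IsOpen ((x : X) × Fib x) topTotal { b | ‖b.2‖ < r }
  /-- (B2): addition is continuous on pairs lying in a common fibre -/
  continuous_add :
    @Continuous { q : ((x : X) × Fib x) × ((x : X) × Fib x) // q.1.1 = q.2.1 }
      ((x : X) × Fib x)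
      (@instTopologicalSpaceSubtype _ _
        (@instTopologicalSpaceProd _ _ topTotal topTotal))
      topTotal
      (fun q => ⟨q.1.1.1, q.1.1.2 + cast (congrArg Fib q.2.symm) q.1.2.2⟩)
  /-- (B3): scalar multiplication is continuous -/
  continuous_smul : ∀ c : ℂ,
    @Continuous ((x : X) × Fib x) ((x : X) × Fib x) topTotal topTotal
      fun b => ⟨b.1, c • b.2⟩
  /-- (B4): if `p (a i) → x` and `‖a i‖ → 0` then `a i → 0ₓ` (stated for filters,
  which is equivalent to the statement for nets) -/
  tendsto_zero : ∀ {ι : Type} (l : Filter ι) (a : ι → (x : X) × Fib x) (x : X),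
    Filter.Tendsto (fun i => (a i).1) l (nhds x) →
    Filter.Tendsto (fun i => ‖(a i).2‖) l (nhds (0 : ℝ)) →
    Filter.Tendsto a l (@nhds _ topTotal (⟨x, 0⟩ : (x : X) × Fib x))
  /-- the bundle has enough sections -/
  enough_sections : ∀ (x : X) (v : Fib x), ∃ f : ∀ y, Fib y,
    (@Continuous X ((x : X) × Fib x) inferInstance topTotal fun y => ⟨y, f y⟩) ∧
      f x = v

namespace USCBanachBundle

variable {X : Type} [TopologicalSpace X] {Fib : X → Type}
  [∀ x, NormedAddCommGroup (Fib x)] [∀ x, NormedSpace ℂ (Fib x)]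
  [∀ x, CompleteSpace (Fib x)]

/-- `f` is a continuous (global) section of the bundle `B`. -/
def IsContSection (B : USCBanachBundle X Fib) (f : ∀ x, Fib x) : Prop :=
  @Continuous X ((x : X) × Fib x) inferInstance B.topTotal fun x => ⟨x, f x⟩

/-- membership in `Γ_c(X;𝔅)`: continuous compactly supported sections. -/
def MemGammaC (B : USCBanachBundle X Fib) (f : ∀ x, Fib x) : Prop :=
  B.IsContSection f ∧ ∃ K : Set X, IsCompact K ∧ ∀ x ∉ K, f x = 0

/-- membership in `Γ₀(X;𝔅)`: continuous sections vanishing at infinity. -/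
def MemGammaZero (B : USCBanachBundle X Fib) (f : ∀ x, Fib x) : Prop :=
  B.IsContSection f ∧ ∀ ε : ℝ, 0 < ε → IsCompact { x | ε ≤ ‖f x‖ }

/-- The Banach space `Γ₀(X;𝔅)` is separable: there is a countable set of sections in
`Γ₀` which is dense for the supremum norm. -/
def SeparableGammaZero (B : USCBanachBundle X Fib) : Prop :=
  ∃ D : Set (∀ x, Fib x), D.Countable ∧ (∀ g ∈ D, B.MemGammaZero g) ∧
    ∀ f, B.MemGammaZero f → ∀ ε : ℝ, 0 < ε → ∃ g ∈ D, ∀ x, ‖f x - g x‖ < ε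

/-- uniform convergence of a sequence of sections to a section. -/
def UnifTendsto (B : USCBanachBundle X Fib) (F : ℕ → ∀ x, Fib x)
    (f : ∀ x, Fib x) : Prop :=
  ∀ ε : ℝ, 0 < ε → ∃ N : ℕ, ∀ n ≥ N, ∀ x, ‖F n x - f x‖ < ε

/-- continuity of `ν` in the inductive limit topology: `ν fₙ → ν f` whenever `fₙ → f`
uniformly with all supports contained in a fixed compact set. -/
def ILTContinuous (B : USCBanachBundle X Fib) (ν : (∀ x, Fib x) → ℂ) : Prop :=
  ∀ (F : ℕ → ∀ x, Fib x) (f : ∀ x, Fib x) (K : Set X),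
    (∀ n, B.MemGammaC (F n)) → B.MemGammaC f → IsCompact K →
    (∀ n, ∀ x ∉ K, F n x = 0) → B.UnifTendsto F f →
    Filter.Tendsto (fun n => ν (F n)) Filter.atTop (nhds (ν f))

/-- a generalized Radon measure on the bundle `B`: a linear functional on
`Γ_c(X;𝔅)` which is continuous in the inductive limit topology. -/
def IsGRM (B : USCBanachBundle X Fib) (ν : (∀ x, Fib x) → ℂ) : Prop :=
  (∀ f g, B.MemGammaC f → B.MemGammaC g →
    ν (fun x => f x + g x) = ν f + ν g) ∧
  (∀ (c : ℂ) (f), B.MemGammaC f → ν (fun x => c • f x) = c * ν f) ∧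
  B.ILTContinuous ν

/-- `μ` is the total variation `|ν|` of the generalized Radon measure `ν`: a Radon
measure (Borel measure, finite on compacts) such that for every nonnegative
`φ ∈ C_c(X)`, `∫ φ dμ = sup { |ν f| : f ∈ Γ_c(X;𝔅), ‖f x‖ ≤ φ x for all x }`. -/
def IsTotalVariation [MeasurableSpace X] (B : USCBanachBundle X Fib)
    (ν : (∀ x, Fib x) → ℂ) (μ : Measure X) : Prop :=
  (∀ K : Set X, IsCompact K → μ K < ⊤) ∧
  ∀ φ : X → ℝ, Continuous φ → HasCompactSupport φ → (∀ x, 0 ≤ φ x) →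
    ∫ x, φ x ∂μ =
      sSup { r : ℝ | ∃ f, B.MemGammaC f ∧ (∀ x, ‖f x‖ ≤ φ x) ∧ r = ‖ν f‖ }

/-- membership in `Σ_c(X;𝔅)`: bounded sections which are pointwise limits (in the
topology of the total space) of a uniformly bounded sequence in `Γ_c(X;𝔅)` whose
supports are contained in a fixed compact set. -/
def MemSigmaC (B : USCBanachBundle X Fib) (f : ∀ x, Fib x) : Prop :=
  (∃ M : ℝ, ∀ x, ‖f x‖ ≤ M) ∧
  ∃ (F : ℕ → ∀ x, Fib x) (K : Set X) (M : ℝ),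
    (∀ n, B.MemGammaC (F n)) ∧ (∀ n x, ‖F n x‖ ≤ M) ∧ IsCompact K ∧
    (∀ n, ∀ x ∉ K, F n x = 0) ∧
    ∀ x, Filter.Tendsto (fun n => (⟨x, F n x⟩ : (x : X) × Fib x)) Filter.atTop
      (@nhds _ B.topTotal (⟨x, f x⟩ : (x : X) × Fib x))

end USCBanachBundle

namespace USCBanachBundle

/-- Sums of sections converging in the total space converge. -/
lemma tendsto_add_aux {X : Type} [TopologicalSpace X] {Fib : X → Type}
    [∀ x, NormedAddCommGroup (Fib x)] [∀ x, NormedSpace ℂ (Fib x)]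
    [∀ x, CompleteSpace (Fib x)] (B : USCBanachBundle X Fib)
    (f g : ∀ x, Fib x) (x₀ : X) (u v : Fib x₀)
    (hf : Filter.Tendsto (fun x => (⟨x, f x⟩ : (x : X) × Fib x)) (nhds x₀)
      (@nhds _ B.topTotal ⟨x₀, u⟩))
    (hg : Filter.Tendsto (fun x => (⟨x, g x⟩ : (x : X) × Fib x)) (nhds x₀)
      (@nhds _ B.topTotal ⟨x₀, v⟩)) :
    Filter.Tendsto (fun x => (⟨x, f x + g x⟩ : (x : X) × Fib x)) (nhds x₀)
      (@nhds _ B.topTotal ⟨x₀, u + v⟩) := by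
  letI : TopologicalSpace ((x : X) × Fib x) := B.topTotal
  have hc := (B.continuous_add).tendsto ⟨(⟨x₀, u⟩, ⟨x₀, v⟩), rfl⟩
  have hp : Filter.Tendsto
      (fun x => (⟨((⟨x, f x⟩ : (x : X) × Fib x), (⟨x, g x⟩ : (x : X) × Fib x)), rfl⟩ :
        { q : ((x : X) × Fib x) × ((x : X) × Fib x) // q.1.1 = q.2.1 }))
      (nhds x₀) (nhds ⟨(⟨x₀, u⟩, ⟨x₀, v⟩), rfl⟩) :=
    tendsto_subtype_rng.2 (hf.prodMk_nhds hg)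
  exact hc.comp hp

/-- The scaled section is continuous and compactly supported. -/
lemma scaled_aux {X : Type} [TopologicalSpace X] {Fib : X → Type}
    [∀ x, NormedAddCommGroup (Fib x)] [∀ x, NormedSpace ℂ (Fib x)]
    [∀ x, CompleteSpace (Fib x)] (B : USCBanachBundle X Fib)
    (φ S : X → ℝ) (hφ : Continuous φ) (hS : Continuous S)
    (h0 : ∀ x, 0 ≤ φ x) (hφS : ∀ x, φ x ≤ S x)
    (h : ∀ x, Fib x) (hh : B.MemGammaC h) (hle : ∀ x, ‖h x‖ ≤ S x)
    (k : ∀ x, Fib x) (hk : ∀ x, k x = ((φ x / S x : ℝ) : ℂ) • h x) :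
    B.MemGammaC k ∧ ∀ x, ‖k x‖ ≤ φ x := by
  have hn : ∀ x, ‖k x‖ ≤ φ x := by
    intro x
    have hS0 : 0 ≤ S x := (h0 x).trans (hφS x)
    rw [hk, norm_smul, Complex.norm_real, Real.norm_of_nonneg (div_nonneg (h0 x) hS0)]
    rcases hS0.eq_or_lt with h' | h'
    · rw [← h']; simpa using h0 x
    · calc φ x / S x * ‖h x‖ ≤ φ x / S x * S x :=
            mul_le_mul_of_nonneg_left (hle x) (div_nonneg (h0 x) hS0)
        _ = φ x := div_mul_cancel₀ _ h'.ne'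
  refine ⟨⟨?_, ?_⟩, hn⟩
  · obtain ⟨hc, -⟩ := hh
    unfold IsContSection at hc ⊢
    rw [@continuous_iff_continuousAt _ _ _ B.topTotal] at hc ⊢
    intro x₀
    have hS0 : 0 ≤ S x₀ := (h0 x₀).trans (hφS x₀)
    show Filter.Tendsto _ _ (@nhds _ B.topTotal (⟨x₀, k x₀⟩ : (x : X) × Fib x))
    rcases hS0.eq_or_lt with h' | h'
    · have hφ0 : φ x₀ = 0 := le_antisymm (h' ▸ hφS x₀) (h0 x₀)
      have hk0 : k x₀ = 0 := norm_le_zero_iff.1 (hφ0 ▸ hn x₀)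
      rw [hk0]
      refine B.tendsto_zero _ _ _ Filter.tendsto_id ?_
      refine squeeze_zero (fun x => norm_nonneg _) hn ?_
      simpa [hφ0] using hφ.tendsto x₀
    · set c : X → ℂ := fun x => ((φ x / S x : ℝ) : ℂ) with hcdef
      have hcc : ContinuousAt c x₀ :=
        Complex.continuous_ofReal.continuousAt.comp
          (hφ.continuousAt.div hS.continuousAt h'.ne')
      have t1 : Filter.Tendsto (fun x => (⟨x, c x₀ • h x⟩ : (x : X) × Fib x)) (nhds x₀)
          (@nhds _ B.topTotal ⟨x₀, c x₀ • h x₀⟩) :=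
        (@Continuous.tendsto _ _ B.topTotal B.topTotal _ (B.continuous_smul (c x₀))
          ⟨x₀, h x₀⟩).comp (hc x₀)
      have t2 : Filter.Tendsto (fun x => (⟨x, (c x - c x₀) • h x⟩ : (x : X) × Fib x))
          (nhds x₀) (@nhds _ B.topTotal ⟨x₀, 0⟩) := by
        refine B.tendsto_zero _ _ _ Filter.tendsto_id ?_
        refine squeeze_zero (g := fun x => ‖c x - c x₀‖ * S x)
          (fun x => norm_nonneg _) (fun x => ?_) ?_
        · simp only [norm_smul]
          exact mul_le_mul_of_nonneg_left (hle x) (norm_nonneg _)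
        · have := ((hcc.tendsto.sub_const (c x₀)).norm).mul (hS.tendsto x₀)
          simpa using this
      have t3 := tendsto_add_aux B _ _ x₀ _ _ t1 t2
      have e : ∀ x, k x = c x₀ • h x + (c x - c x₀) • h x := by
        intro x
        rw [hk, ← add_smul]
        congr 1
        simp [hcdef]
      have e0 : k x₀ = c x₀ • h x₀ + 0 := by rw [hk, add_zero]
      rw [e0]
      simp only [e]
      exact t3
  · obtain ⟨-, K, hK, hK0⟩ := hh
    exact ⟨K, hK, fun x hx => by rw [hk, hK0 x hx, smul_zero]⟩

end USCBanachBundle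

/-- from the proof of Lemma 3.1: splitting a section dominated by
`φ₁ + φ₂`.  Here `σᵢ x = φᵢ x / (φ₁ x + φ₂ x)` when `φ₁ x + φ₂ x > 0` and `0`
otherwise (recall that in Lean division by zero is zero, which, since `φ₁, φ₂ ≥ 0`,
gives exactly this function), and `hᵢ = σᵢ · h`. -/
theorem USCBanachBundle.split_dominated_section
    {G : Type} [TopologicalSpace G] [LocallyCompactSpace G] [T2Space G]
    {Fib : G → Type}
    [∀ x, NormedAddCommGroup (Fib x)] [∀ x, NormedSpace ℂ (Fib x)]
    [∀ x, CompleteSpace (Fib x)]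
    (B : USCBanachBundle G Fib)
    (φ₁ φ₂ : G → ℝ)
    (hφ₁c : Continuous φ₁) (hφ₁s : HasCompactSupport φ₁) (hφ₁0 : ∀ x, 0 ≤ φ₁ x)
    (hφ₂c : Continuous φ₂) (hφ₂s : HasCompactSupport φ₂) (hφ₂0 : ∀ x, 0 ≤ φ₂ x)
    (h : ∀ x, Fib x) (hh : B.MemGammaC h)
    (hle : ∀ x, ‖h x‖ ≤ φ₁ x + φ₂ x)
    (h₁ h₂ : ∀ x, Fib x)
    (hd₁ : ∀ x, h₁ x = ((φ₁ x / (φ₁ x + φ₂ x) : ℝ) : ℂ) • h x)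
    (hd₂ : ∀ x, h₂ x = ((φ₂ x / (φ₁ x + φ₂ x) : ℝ) : ℂ) • h x) :
    B.MemGammaC h₁ ∧ B.MemGammaC h₂ ∧ (∀ x, h x = h₁ x + h₂ x) ∧
      (∀ x, ‖h₁ x‖ ≤ φ₁ x) ∧ (∀ x, ‖h₂ x‖ ≤ φ₂ x) := by
  have a₁ := scaled_aux B φ₁ (fun x => φ₁ x + φ₂ x) hφ₁c (hφ₁c.add hφ₂c) hφ₁0
    (fun x => le_add_of_nonneg_right (hφ₂0 x)) h hh hle h₁ hd₁
  have a₂ := scaled_aux B φ₂ (fun x => φ₁ x + φ₂ x) hφ₂c (hφ₁c.add hφ₂c) hφ₂0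
    (fun x => le_add_of_nonneg_left (hφ₁0 x)) h hh hle h₂ hd₂
  refine ⟨a₁.1, a₂.1, fun x => ?_, a₁.2, a₂.2⟩
  rw [hd₁, hd₂, ← add_smul, ← Complex.ofReal_add, ← add_div]
  by_cases h' : φ₁ x + φ₂ x = 0
  · have : h x = 0 := norm_le_zero_iff.1 (h' ▸ hle x)
    rw [this, smul_zero]
  · rw [div_self h', Complex.ofReal_one, one_smul]
end

section
/- (Tietze Extension Theorem for upper semicontinuous Banach bundles.) Let p : 𝔅 → G be an upper semicontinuous Banach bundle over a second countable locally compact Hausdorff space G (with enough sections), and let Y ⊆ G be a closed subset. If g : Y → 𝔅 is continuous with p(g(y)) = y for all y ∈ Y and g has compact support (a compactly supported continuous section of the restricted bundle 𝔅|_Y), then there exists f ∈ Γ_c(G;𝔅) such that f(y) = g(y) for all y ∈ Y. -/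
open MeasureTheory Filter Topology Set

namespace USCBanachBundle

section Helpers

variable {X : Type} [TopologicalSpace X] {Fib : X → Type}
  [∀ x, NormedAddCommGroup (Fib x)] [∀ x, NormedSpace ℂ (Fib x)]
  [∀ x, CompleteSpace (Fib x)]

/-- continuity of a section along a map -/
def ContAlong (B : USCBanachBundle X Fib) {Z : Type} [TopologicalSpace Z] (a : Z → X)
    (s : ∀ z, Fib (a z)) : Prop :=
  @Continuous Z ((x : X) × Fib x) inferInstance B.topTotal fun z => ⟨a z, s z⟩

theorem ContAlong.add {B : USCBanachBundle X Fib} {Z : Type} [TopologicalSpace Z] {a : Z → X}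
    {s t : ∀ z, Fib (a z)} (hs : B.ContAlong a s) (ht : B.ContAlong a t) :
    B.ContAlong a (fun z => s z + t z) := by
  letI := B.topTotal
  have h : Continuous (fun z => (⟨(⟨a z, s z⟩, ⟨a z, t z⟩), rfl⟩ :
      { q : ((x : X) × Fib x) × ((x : X) × Fib x) // q.1.1 = q.2.1 })) :=
    Continuous.subtype_mk (Continuous.prodMk hs ht) _
  exact B.continuous_add.comp h

theorem ContAlong.const_smul {B : USCBanachBundle X Fib} {Z : Type} [TopologicalSpace Z]
    {a : Z → X} {s : ∀ z, Fib (a z)} (hs : B.ContAlong a s) (c : ℂ) :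
    B.ContAlong a (fun z => c • s z) := by
  letI := B.topTotal
  exact (B.continuous_smul c).comp hs

theorem ContAlong.sub {B : USCBanachBundle X Fib} {Z : Type} [TopologicalSpace Z] {a : Z → X}
    {s t : ∀ z, Fib (a z)} (hs : B.ContAlong a s) (ht : B.ContAlong a t) :
    B.ContAlong a (fun z => s z - t z) := by
  have := hs.add (ht.const_smul (-1))
  simpa [sub_eq_add_neg] using this

theorem ContAlong.isOpen_lt {B : USCBanachBundle X Fib} {Z : Type} [TopologicalSpace Z]
    {a : Z → X} {s : ∀ z, Fib (a z)} (hs : B.ContAlong a s) (r : ℝ) :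
    IsOpen {z | ‖s z‖ < r} := by
  letI := B.topTotal
  exact (B.isOpen_norm_lt r).preimage hs

theorem IsContSection.along {B : USCBanachBundle X Fib} {f : ∀ x, Fib x}
    (hf : B.IsContSection f) {Z : Type} [TopologicalSpace Z] {a : Z → X} (ha : Continuous a) :
    B.ContAlong a (fun z => f (a z)) := by
  letI := B.topTotal
  exact Continuous.comp hf ha

theorem IsContSection.add {B : USCBanachBundle X Fib} {f g : ∀ x, Fib x}
    (hf : B.IsContSection f) (hg : B.IsContSection g) :
    B.IsContSection (fun x => f x + g x) :=
  ContAlong.add (B := B) (a := id) hf hg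

theorem IsContSection.sub {B : USCBanachBundle X Fib} {f g : ∀ x, Fib x}
    (hf : B.IsContSection f) (hg : B.IsContSection g) :
    B.IsContSection (fun x => f x - g x) :=
  ContAlong.sub (B := B) (a := id) hf hg

theorem IsContSection.isOpen_lt {B : USCBanachBundle X Fib} {f : ∀ x, Fib x}
    (hf : B.IsContSection f) (r : ℝ) : IsOpen {x | ‖f x‖ < r} :=
  ContAlong.isOpen_lt (B := B) (a := id) hf r

theorem isContSection_of_local {B : USCBanachBundle X Fib} {f : ∀ x, Fib x}
    (h : ∀ x₀, ∃ f₀ : ∀ x, Fib x, B.IsContSection f₀ ∧ f₀ x₀ = f x₀ ∧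
      ∀ ε : ℝ, 0 < ε → ∀ᶠ x in 𝓝 x₀, ‖f x - f₀ x‖ < ε) : B.IsContSection f := by
  letI := B.topTotal
  refine continuous_iff_continuousAt.2 fun x₀ => ?_
  obtain ⟨f₀, hf₀, he, hl⟩ := h x₀
  have h1 : Tendsto (fun x => (⟨x, f x - f₀ x⟩ : (x : X) × Fib x)) (𝓝 x₀)
      (𝓝 (⟨x₀, 0⟩ : (x : X) × Fib x)) := by
    refine B.tendsto_zero (𝓝 x₀) _ x₀ tendsto_id ?_
    rw [Metric.tendsto_nhds]
    intro ε hε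
    filter_upwards [hl ε hε] with x hx
    simpa using hx
  have h2 : ContinuousAt (fun x => (⟨x, f x - f₀ x⟩ : (x : X) × Fib x)) x₀ := by
    have : (⟨x₀, f x₀ - f₀ x₀⟩ : (x : X) × Fib x) = ⟨x₀, 0⟩ := by rw [he, sub_self]
    change Tendsto _ _ (𝓝 (⟨x₀, f x₀ - f₀ x₀⟩ : (x : X) × Fib x))
    rw [this]
    exact h1
  have h3 : ContinuousAt (fun x => (⟨x, f₀ x⟩ : (x : X) × Fib x)) x₀ :=
    Continuous.continuousAt hf₀
  have h4 : ContinuousAt (fun z => (⟨(⟨z, f z - f₀ z⟩, ⟨z, f₀ z⟩), rfl⟩ :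
      { q : ((x : X) × Fib x) × ((x : X) × Fib x) // q.1.1 = q.2.1 })) x₀ := by
    refine (Topology.IsInducing.continuousAt_iff ⟨rfl⟩ (g := Subtype.val)).2 ?_
    exact h2.prodMk h3
  have h5 := (B.continuous_add.continuousAt).comp h4
  convert h5 using 2 with x
  simp

theorem isContSection_zero (B : USCBanachBundle X Fib) :
    B.IsContSection (fun _ => 0) := by
  letI := B.topTotal
  refine continuous_iff_continuousAt.2 fun x₀ => ?_
  refine B.tendsto_zero (𝓝 x₀) _ x₀ tendsto_id ?_
  simp

theorem IsContSection.smul {B : USCBanachBundle X Fib} {f : ∀ x, Fib x}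
    (hf : B.IsContSection f) {φ : X → ℝ} (hφ : Continuous φ) :
    B.IsContSection (fun x => (φ x : ℂ) • f x) := by
  refine isContSection_of_local fun x₀ => ⟨fun x => (φ x₀ : ℂ) • f x,
    ContAlong.const_smul (B := B) (a := id) hf _, rfl, fun ε hε => ?_⟩
  have h1 : ∀ᶠ x in 𝓝 x₀, ‖f x‖ < ‖f x₀‖ + 1 :=
    (hf.isOpen_lt _).mem_nhds (by simp)
  have hM : 0 < ‖f x₀‖ + 1 := by positivity
  have h2 : ∀ᶠ x in 𝓝 x₀, dist (φ x) (φ x₀) < ε / (‖f x₀‖ + 1) :=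
    Metric.tendsto_nhds.1 (hφ.tendsto x₀) _ (by positivity)
  filter_upwards [h1, h2] with x hx1 hx2
  rw [← sub_smul, norm_smul, ← Complex.ofReal_sub, Complex.norm_real, ← dist_eq_norm]
  calc dist (φ x) (φ x₀) * ‖f x‖ ≤ dist (φ x) (φ x₀) * (‖f x₀‖ + 1) := by gcongr
    _ < ε / (‖f x₀‖ + 1) * (‖f x₀‖ + 1) := by gcongr
    _ = ε := by field_simp

theorem isContSection_sum {B : USCBanachBundle X Fib} {ι : Type} (T : Finset ι)
    (f : ι → ∀ x, Fib x) (hf : ∀ i, B.IsContSection (f i)) :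
    B.IsContSection (fun x => ∑ i ∈ T, f i x) := by
  classical
  induction T using Finset.induction_on with
  | empty => simpa using B.isContSection_zero
  | insert i T hi ih =>
    simp only [Finset.sum_insert hi]
    exact (hf i).add ih

theorem exists_approx [NormalSpace X] [ParacompactSpace X] (B : USCBanachBundle X Fib)
    (Y : Set X) (hY : IsClosed Y) (g : ∀ y : Y, Fib (y : X))
    (hg : B.ContAlong (fun y : Y => (y : X)) g) (ε : ℝ) (hε : 0 < ε) :
    ∃ F : ∀ x, Fib x, B.IsContSection F ∧ ∀ y : Y, ‖g y - F y‖ ≤ ε := by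
  choose s hs hsv using fun y : Y => B.enough_sections y (g y)
  have hU : ∀ y : Y, ∃ U : Set X, IsOpen U ∧ (y : X) ∈ U ∧
      ∀ z : Y, (z : X) ∈ U → ‖g z - s y z‖ < ε := by
    intro y
    have ho := (hg.sub (IsContSection.along (B := B) (hs y)
      (continuous_subtype_val : Continuous (fun z : Y => (z : X))))).isOpen_lt ε
    obtain ⟨U, hUo, hU⟩ := isOpen_induced_iff.1 ho
    have hmem : ∀ z : Y, (z : X) ∈ U ↔ ‖g z - s y z‖ < ε := fun z => by
      have := Set.ext_iff.1 hU z
      simpa using this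
    refine ⟨U, hUo, (hmem y).2 ?_, fun z hz => (hmem z).1 hz⟩
    simp [hsv, hε]
  choose U hUo hUy hUn using hU
  obtain ⟨ρ, hρ⟩ := PartitionOfUnity.exists_isSubordinate hY U hUo
    (fun y hy => mem_iUnion.2 ⟨⟨y, hy⟩, hUy ⟨y, hy⟩⟩)
  have key : ∀ x₀ : X, ∃ T : Finset Y, ∀ᶠ x in 𝓝 x₀, Function.support (fun i => ρ i x) ⊆ T := by
    intro x₀
    obtain ⟨T, hT⟩ := ρ.exists_finset_nhds' x₀
    exact ⟨T, hT.2⟩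
  have hsum : ∀ (T : Finset Y) (x : X), Function.support (fun i => ρ i x) ⊆ T →
      ∑ᶠ i, (ρ i x : ℂ) • s i x = ∑ i ∈ T, (ρ i x : ℂ) • s i x := by
    intro T x h
    refine finsum_eq_sum_of_support_subset _ (Set.Subset.trans ?_ h)
    intro i hi h0
    exact hi (by simp [show ρ i x = 0 from h0])
  refine ⟨fun x => ∑ᶠ i, (ρ i x : ℂ) • s i x, isContSection_of_local fun x₀ => ?_, fun y => ?_⟩
  · obtain ⟨T, hT⟩ := key x₀
    refine ⟨fun x => ∑ i ∈ T, (ρ i x : ℂ) • s i x,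
      isContSection_sum T (fun i x => (ρ i x : ℂ) • s i x)
        fun i => IsContSection.smul (B := B) (hs i) (ρ i).continuous,
      (hsum T x₀ hT.self_of_nhds).symm, fun δ hδ => ?_⟩
    filter_upwards [hT] with x hx
    rw [hsum T x hx]
    simpa using hδ
  · obtain ⟨T, hT⟩ := key y
    have hTy := hT.self_of_nhds
    have h1 : ∑ i ∈ T, ρ i y = 1 := by
      rw [← finsum_eq_sum_of_support_subset _ hTy]
      exact ρ.sum_eq_one y.2
    have h2 : g y = ∑ i ∈ T, (ρ i y : ℂ) • g y := by
      rw [← Finset.sum_smul, ← Complex.ofReal_sum, h1]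
      simp
    simp only
    rw [hsum T y hTy]
    calc ‖g y - ∑ i ∈ T, (ρ i y : ℂ) • s i y‖
        = ‖∑ i ∈ T, (ρ i y : ℂ) • (g y - s i y)‖ := by
          simp only [smul_sub, Finset.sum_sub_distrib]
          rw [← h2]
      _ ≤ ∑ i ∈ T, ‖(ρ i y : ℂ) • (g y - s i y)‖ := norm_sum_le _ _
      _ ≤ ∑ i ∈ T, ρ i y * ε := by
          refine Finset.sum_le_sum fun i _ => ?_
          rw [norm_smul, Complex.norm_real, Real.norm_of_nonneg (ρ.nonneg i y)]
          by_cases h0 : ρ i y = 0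
          · simp [h0]
          · exact mul_le_mul_of_nonneg_left
              (hUn i y (hρ i (subset_closure h0))).le (ρ.nonneg i y)
      _ = ε := by rw [← Finset.sum_mul, h1, one_mul]

theorem exists_step [NormalSpace X] [ParacompactSpace X] (B : USCBanachBundle X Fib)
    (Y : Set X) (hY : IsClosed Y) (g : ∀ y : Y, Fib (y : X))
    (hg : B.ContAlong (fun y : Y => (y : X)) g) (δ : ℝ) (hδ : 0 < δ)
    (S : ∀ x, Fib x) (hS : B.IsContSection S) (hb : ∀ y : Y, ‖g y - S y‖ ≤ δ) :
    ∃ S' : ∀ x, Fib x, (B.IsContSection S' ∧ ∀ y : Y, ‖g y - S' y‖ ≤ δ / 2) ∧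
      ∀ x, ‖S' x - S x‖ ≤ 2 * δ := by
  obtain ⟨F, hF, hFa⟩ := B.exists_approx Y hY (fun y => g y - S y)
    (hg.sub (hS.along continuous_subtype_val)) (δ / 2) (by positivity)
  have hV := hF.isOpen_lt (2 * δ)
  have hd : Disjoint {x | ‖F x‖ < 2 * δ}ᶜ Y := by
    rw [Set.disjoint_left]
    intro x hx hxY
    apply hx
    have h1 := hFa ⟨x, hxY⟩
    have h2 := hb ⟨x, hxY⟩
    have h3 := norm_sub_norm_le (F x) (g ⟨x, hxY⟩ - S x)
    rw [norm_sub_rev (F x)] at h3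
    change ‖F x‖ < 2 * δ
    simp only at h1 h2 h3
    linarith
  obtain ⟨φ, hφ0, hφ1, hφ⟩ := exists_continuous_zero_one_of_isClosed hV.isClosed_compl hY hd
  refine ⟨fun x => S x + (φ x : ℂ) • F x, ⟨hS.add (hF.smul φ.continuous), fun y => ?_⟩, fun x => ?_⟩
  · have : φ y = 1 := hφ1 y.2
    simp only [this, Complex.ofReal_one, one_smul, ← sub_sub]
    exact hFa y
  · simp only [add_sub_cancel_left]
    by_cases hx : ‖F x‖ < 2 * δ
    · rw [norm_smul, Complex.norm_real, Real.norm_of_nonneg (hφ x).1]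
      nlinarith [(hφ x).1, (hφ x).2, norm_nonneg (F x)]
    · have : φ x = 0 := hφ0 hx
      simp [this]
      positivity

theorem isContSection_of_unif {B : USCBanachBundle X Fib} {f : ∀ x, Fib x}
    (h : ∀ ε : ℝ, 0 < ε → ∃ F : ∀ x, Fib x, B.IsContSection F ∧ ∀ x, ‖F x - f x‖ < ε) :
    B.IsContSection f := by
  refine isContSection_of_local fun x₀ => ?_
  obtain ⟨f₀, hf₀, he⟩ := B.enough_sections x₀ (f x₀)
  refine ⟨f₀, hf₀, he, fun ε hε => ?_⟩
  obtain ⟨F, hF, hFf⟩ := h (ε / 2) (by positivity)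
  have h1 : ∀ᶠ x in 𝓝 x₀, ‖F x - f₀ x‖ < ε / 2 :=
    ((IsContSection.sub (B := B) hF hf₀).isOpen_lt _).mem_nhds (by
      simpa [he] using hFf x₀)
  filter_upwards [h1] with x hx
  have h2 := hFf x
  have h3 := norm_sub_le (F x - f₀ x) (F x - f x)
  rw [sub_sub_sub_cancel_left] at h3
  linarith

theorem exists_extension [NormalSpace X] [ParacompactSpace X] (B : USCBanachBundle X Fib)
    (Y : Set X) (hY : IsClosed Y) (g : ∀ y : Y, Fib (y : X))
    (hg : B.ContAlong (fun y : Y => (y : X)) g) :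
    ∃ f : ∀ x, Fib x, B.IsContSection f ∧ ∀ y : Y, f y = g y := by
  let P : ℕ → (∀ x, Fib x) → Prop := fun n S =>
    B.IsContSection S ∧ ∀ y : Y, ‖g y - S y‖ ≤ (1 / 2 : ℝ) ^ n
  have hstep : ∀ (n : ℕ) (S : {S // P n S}), ∃ S' : {S // P (n + 1) S},
      ∀ x, ‖S'.1 x - S.1 x‖ ≤ 2 * (1 / 2 : ℝ) ^ n := by
    rintro n ⟨S, hS, hb⟩
    obtain ⟨S', ⟨h1, h2⟩, h3⟩ := B.exists_step Y hY g hg ((1 / 2 : ℝ) ^ n) (by positivity) S hS hb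
    refine ⟨⟨S', h1, fun y => (h2 y).trans (le_of_eq ?_)⟩, h3⟩
    rw [pow_succ]
    ring
  choose nxt hnxt using hstep
  obtain ⟨F₀, hF₀, hF₀b⟩ := B.exists_approx Y hY g hg 1 one_pos
  let S : ∀ n, {S // P n S} := fun n =>
    Nat.rec ⟨F₀, hF₀, by simpa using hF₀b⟩ (fun n s => nxt n s) n
  have hS : ∀ n x, dist ((S n).1 x) ((S (n + 1)).1 x) ≤ 2 * (1 / 2 : ℝ) ^ n := by
    intro n x
    rw [dist_comm, dist_eq_norm]
    exact hnxt n (S n) x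
  have hlim : ∀ x, ∃ v, Tendsto (fun n => (S n).1 x) atTop (𝓝 v) := fun x =>
    cauchySeq_tendsto_of_complete
      (cauchySeq_of_le_geometric (1 / 2) 2 (by norm_num) fun n => hS n x)
  choose f hf using hlim
  have hpow : Tendsto (fun n : ℕ => (1 / 2 : ℝ) ^ n) atTop (𝓝 0) :=
    tendsto_pow_atTop_nhds_zero_of_lt_one (by norm_num) (by norm_num)
  refine ⟨f, isContSection_of_unif fun ε hε => ?_, fun y => ?_⟩
  · have hev : ∀ᶠ n : ℕ in atTop, (1 / 2 : ℝ) ^ n < ε / 4 :=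
      hpow.eventually (gt_mem_nhds (by positivity))
    obtain ⟨n, hn⟩ := hev.exists
    refine ⟨(S n).1, (S n).2.1, fun x => ?_⟩
    have := dist_le_of_le_geometric_of_tendsto (1 / 2) 2 (by norm_num) (fun n => hS n x) (hf x) n
    rw [dist_eq_norm] at this
    norm_num at this hn ⊢
    linarith
  · refine tendsto_nhds_unique (hf y) ?_
    rw [tendsto_iff_norm_sub_tendsto_zero]
    refine squeeze_zero (fun _ => norm_nonneg _) (fun n => ?_) hpow
    rw [norm_sub_rev]
    exact (S n).2.2 y

end Helpers

end USCBanachBundle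

/-- Proposition A.5 of the paper, Tietze extension: if `Y ⊆ G` is
closed and `g` is a compactly supported continuous section of the restricted bundle
`𝔅|_Y`, then there is `f ∈ Γ_c(G;𝔅)` with `f y = g y` for every `y ∈ Y`. -/
theorem USCBanachBundle.tietze_extension
    {G : Type} [TopologicalSpace G] [SecondCountableTopology G]
    [LocallyCompactSpace G] [T2Space G]
    {Fib : G → Type}
    [∀ x, NormedAddCommGroup (Fib x)] [∀ x, NormedSpace ℂ (Fib x)]
    [∀ x, CompleteSpace (Fib x)]
    (B : USCBanachBundle G Fib)
    (Y : Set G) (hY : IsClosed Y)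
    (g : ∀ y : Y, Fib (y : G))
    (hg_cont : @Continuous Y ((x : G) × Fib x) inferInstance B.topTotal
      fun y => ⟨(y : G), g y⟩)
    (hg_supp : ∃ K : Set G, IsCompact K ∧ ∀ y : Y, (y : G) ∉ K → g y = 0) :
    ∃ f : ∀ x, Fib x, B.MemGammaC f ∧ ∀ y : Y, f (y : G) = g y := by
  obtain ⟨f, hf, hfg⟩ := B.exists_extension Y hY g hg_cont
  obtain ⟨K, hK, hKg⟩ := hg_supp
  obtain ⟨χ, hχ1, -, hχc, -⟩ := exists_continuous_one_zero_of_isCompact hK isClosed_empty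
    (Set.disjoint_empty K)
  refine ⟨fun x => (χ x : ℂ) • f x, ⟨hf.smul χ.continuous, tsupport χ, hχc, fun x hx => ?_⟩,
    fun y => ?_⟩
  · simp [image_eq_zero_of_notMem_tsupport hx]
  · by_cases hy : (y : G) ∈ K
    · have : χ y = 1 := hχ1 hy
      simp [this, hfg]
    · simp [hfg, hKg y hy]
end
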